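/- arXiv:1808.08736 — 2 statements merged into one kernel-verified Lean document; each statement's English description precedes it below -/
import Mathlib

section
/- Let ν ∈ (0,1], k ∈ ℤ with |k| ≥ 1, and λ ∈ ℝ. Let w : [−1,1] → ℂ be twice continuously differentiable with w(−1) = w(1) = 0, and set F(y) = −ν(w''(y) − k²w(y)) + ik(y−λ)w(y). Let φ : [−1,1] → ℂ be twice continuously differentiable with φ''(y) − k²φ(y) = w(y) on [−1,1] and φ(−1) = φ(1) = 0, and set ‖u‖_{L²} = (‖φ'‖_{L²}² + k²‖φ‖_{L²}²)^{1/2}. Then there is a constant C > 0, independent of ν, k, λ and w, such that ν^{1/6}|k|^{4/3}‖u‖_{L²} + ν^{1/6}|k|^{5/6}‖w‖_{L¹} + ν^{2/3}|k|^{1/3}‖w'‖_{L²} + (νk²)^{1/3}‖w‖_{L²} + |k|‖(y−λ)w‖_{L²} ≤ C‖F‖_{L²}. -/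
/-- The `L²` norm of a function on the interval `[-1,1]`. -/
noncomputable def nL2 (f : ℝ → ℂ) : ℝ :=
  (∫ y in Set.Icc (-1:ℝ) 1, ‖f y‖ ^ 2) ^ ((1:ℝ)/2)

/-- The `L¹` norm of a function on the interval `[-1,1]`. -/
noncomputable def nL1 (f : ℝ → ℂ) : ℝ :=
  ∫ y in Set.Icc (-1:ℝ) 1, ‖f y‖

/-!
Test `F = -ν (w'' - k² w) + i k (y - λ) w` against `w` and against `i (y - λ) w`, and integrate by
parts. With `A = ‖w‖`, `B = ‖w'‖`, `X = ‖(y - λ) w‖`, `G = ‖F‖` in `L²`, the real parts give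
`ν B² ≤ G A` and `|k| X² ≤ G X + ν A B`. The uncertainty inequality `A² ≤ 2 X B`, obtained by
integrating `(y - λ) (|w|²)'`, closes the system: every scaled norm is at most a multiple of `G`.

The `L¹` bound is Cauchy-Schwarz against the weight `((y - λ)² + δ²)⁻¹`, whose integral is at most
`π / δ`; the width `δ = (ν / |k|)^(1/3)` balances `X` and `δ A`. For the velocity, pairing
`φ'' - k² φ = w` with `φ` gives `‖u‖² ≤ ‖w‖_{L¹} sup |φ|`, and `|k| (sup |φ|)² ≤ ‖u‖²` because
`sup |φ|² ≤ 2 ‖φ‖ ‖φ'‖`.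

Fractional powers disappear on writing `ν = p⁶` and `|k| = q⁶`.
-/

open MeasureTheory Set

local notation "‖" f "‖_L¹[" a "," b "]" => lpNorm f 1 (volume.restrict (Icc a b))
local notation "‖" f "‖_L²[" a "," b "]" => lpNorm f 2 (volume.restrict (Icc a b))

section LpNorm

variable {α E : Type*} {mα : MeasurableSpace α} {μ : Measure α} [NormedAddCommGroup E]

lemma sq_lpNorm_two {f : α → E} (hf : AEStronglyMeasurable f μ) :
    lpNorm f 2 μ ^ 2 = ∫ x, ‖f x‖ ^ 2 ∂μ := by
  rw [lpNorm_eq_integral_norm_rpow_toReal two_ne_zero ENNReal.ofNat_ne_top hf, ENNReal.toReal_ofNat,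
    ← Real.rpow_mul_natCast (integral_nonneg fun _ ↦ by positivity)]
  norm_num

lemma abs_integral_inner_le_lpNorm_mul_lpNorm [InnerProductSpace ℝ E] {f g : α → E}
    (hf : MemLp f 2 μ) (hg : MemLp g 2 μ) :
    |∫ x, inner ℝ (f x) (g x) ∂μ| ≤ lpNorm f 2 μ * lpNorm g 2 μ := by
  have h := abs_real_inner_le_norm hf.toLp hg.toLp
  rw [L2.inner_def, Lp.norm_toLp, Lp.norm_toLp, toReal_eLpNorm hf.1, toReal_eLpNorm hg.1] at h
  rwa [integral_congr_ae (g := fun x ↦ inner ℝ (f x) (g x))] at h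
  filter_upwards [hf.coeFn_toLp, hg.coeFn_toLp] with x hfx hgx
  rw [hfx, hgx]

lemma sq_lpNorm_one_le_integral_inv_mul_integral {w : α → E} {r : α → ℝ}
    (hw : AEStronglyMeasurable w μ) (hr_pos : ∀ x, 0 < r x)
    (hr_inv : Integrable (fun x ↦ (r x)⁻¹) μ) (hrw : Integrable (fun x ↦ r x * ‖w x‖ ^ 2) μ) :
    lpNorm w 1 μ ^ 2 ≤ (∫ x, (r x)⁻¹ ∂μ) * ∫ x, r x * ‖w x‖ ^ 2 ∂μ := by
  have hr : AEStronglyMeasurable r μ := by simpa using hr_inv.1.fun_inv₀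
  have hsqrt : AEStronglyMeasurable (fun x ↦ √(r x)) μ :=
    Real.continuous_sqrt.comp_aestronglyMeasurable hr
  have hsq_inv (x : α) : ‖(√(r x))⁻¹‖ ^ 2 = (r x)⁻¹ := by
    rw [Real.norm_eq_abs, sq_abs, inv_pow, Real.sq_sqrt (hr_pos x).le]
  have hsq_mul (x : α) : ‖√(r x) * ‖w x‖‖ ^ 2 = r x * ‖w x‖ ^ 2 := by
    rw [Real.norm_eq_abs, sq_abs, mul_pow, Real.sq_sqrt (hr_pos x).le]
  have hinv_meas : AEStronglyMeasurable (fun x ↦ (√(r x))⁻¹) μ := hsqrt.inv₀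
  have hmul_meas : AEStronglyMeasurable (fun x ↦ √(r x) * ‖w x‖) μ := hsqrt.mul hw.norm
  have hinv : MemLp (fun x ↦ (√(r x))⁻¹) 2 μ :=
    (memLp_two_iff_integrable_sq_norm hinv_meas).2 (by simpa only [hsq_inv] using hr_inv)
  have hmul : MemLp (fun x ↦ √(r x) * ‖w x‖) 2 μ :=
    (memLp_two_iff_integrable_sq_norm hmul_meas).2 (by simpa only [hsq_mul] using hrw)
  have hinner (x : α) : inner ℝ (√(r x))⁻¹ (√(r x) * ‖w x‖) = ‖w x‖ := by
    have := (Real.sqrt_pos.2 (hr_pos x)).ne'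
    simp only [RCLike.inner_apply, conj_trivial]
    field_simp
  have cauchy_schwarz := (le_abs_self _).trans (abs_integral_inner_le_lpNorm_mul_lpNorm hinv hmul)
  simp only [hinner] at cauchy_schwarz
  rw [← lpNorm_one_eq_integral_norm hw] at cauchy_schwarz
  calc lpNorm w 1 μ ^ 2 ≤ _ := pow_le_pow_left₀ lpNorm_nonneg cauchy_schwarz 2
    _ = _ := by
      simp only [mul_pow, sq_lpNorm_two hinv_meas, sq_lpNorm_two hmul_meas, hsq_inv, hsq_mul]

lemma memLp_restrict_of_continuousOn [TopologicalSpace α] [OpensMeasurableSpace α]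
    [SecondCountableTopology α] [IsFiniteMeasureOnCompacts μ] {s : Set α} {f : α → E}
    (hs : IsCompact s) (hsm : MeasurableSet s) (hf : ContinuousOn f s) (p : ENNReal) :
    MemLp f p (μ.restrict s) := by
  obtain ⟨C, hC⟩ := hs.exists_bound_of_continuousOn hf
  have : IsFiniteMeasure (μ.restrict s) := ⟨by simpa using hs.measure_lt_top⟩
  exact .of_bound (hf.aestronglyMeasurable hsm) C (ae_restrict_of_forall_mem hsm hC)

end LpNorm

section LorentzianWeight

open Real ProbabilityTheory

lemma inv_sub_sq_add_sq_eq_cauchyPDFReal (lam : ℝ) {δ : NNReal} (hδ : δ ≠ 0) :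
    (fun y : ℝ ↦ ((y - lam) ^ 2 + (δ : ℝ) ^ 2)⁻¹) = fun y ↦ π / δ * cauchyPDFReal lam δ y := by
  ext y
  rw [cauchyPDFReal_def]
  field_simp

lemma integrable_inv_sub_sq_add_sq (lam : ℝ) {δ : ℝ} (hδ : 0 < δ) :
    Integrable fun y ↦ ((y - lam) ^ 2 + δ ^ 2)⁻¹ := by
  lift δ to NNReal using hδ.le
  rw [inv_sub_sq_add_sq_eq_cauchyPDFReal lam (mod_cast hδ.ne')]
  exact (integrable_cauchyPDFReal lam).const_mul _

lemma integral_inv_sub_sq_add_sq (lam : ℝ) {δ : ℝ} (hδ : 0 < δ) :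
    ∫ y, ((y - lam) ^ 2 + δ ^ 2)⁻¹ = π / δ := by
  lift δ to NNReal using hδ.le
  have hδ₀ : δ ≠ 0 := mod_cast hδ.ne'
  rw [inv_sub_sq_add_sq_eq_cauchyPDFReal lam hδ₀, integral_const_mul,
    integral_cauchyPDFReal_eq_one lam hδ₀, mul_one]

lemma mul_sq_lpNorm_one_le {E : Type*} [NormedAddCommGroup E] [NormedSpace ℝ E] {s : Set ℝ}
    {w : ℝ → E} {lam δ : ℝ} (hδ : 0 < δ) (hw : MemLp w 2 (volume.restrict s))
    (hlw : MemLp (fun y ↦ (y - lam) • w y) 2 (volume.restrict s)) :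
    δ * lpNorm w 1 (volume.restrict s) ^ 2 ≤
      π * (lpNorm (fun y ↦ (y - lam) • w y) 2 (volume.restrict s) ^ 2
        + δ ^ 2 * lpNorm w 2 (volume.restrict s) ^ 2) := by
  set μ := volume.restrict s
  have weight_mul_sq (y : ℝ) : ((y - lam) ^ 2 + δ ^ 2) * ‖w y‖ ^ 2 =
      ‖(y - lam) • w y‖ ^ 2 + δ ^ 2 * ‖w y‖ ^ 2 := by
    rw [norm_smul, mul_pow, Real.norm_eq_abs, sq_abs, add_mul]
  have hw_sq : Integrable (fun y ↦ δ ^ 2 * ‖w y‖ ^ 2) μ :=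
    ((memLp_two_iff_integrable_sq_norm hw.1).1 hw).const_mul _
  have hlw_sq := (memLp_two_iff_integrable_sq_norm hlw.1).1 hlw
  have cauchy_schwarz := sq_lpNorm_one_le_integral_inv_mul_integral hw.1
    (r := fun y ↦ (y - lam) ^ 2 + δ ^ 2) (fun y ↦ by positivity)
    (integrable_inv_sub_sq_add_sq lam hδ).integrableOn
    (by simp only [weight_mul_sq]; exact hlw_sq.add hw_sq)
  simp only [weight_mul_sq] at cauchy_schwarz
  rw [integral_add hlw_sq hw_sq, integral_const_mul, ← sq_lpNorm_two hlw.1,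
    ← sq_lpNorm_two hw.1] at cauchy_schwarz
  have weight_le : ∫ y, ((y - lam) ^ 2 + δ ^ 2)⁻¹ ∂μ ≤ π / δ := by
    rw [← integral_inv_sub_sq_add_sq lam hδ]
    exact setIntegral_le_integral (integrable_inv_sub_sq_add_sq lam hδ)
      (.of_forall fun y ↦ by positivity)
  calc δ * lpNorm w 1 μ ^ 2 ≤ δ * (π / δ * _) := by
        gcongr
        exact cauchy_schwarz.trans (by gcongr)
    _ = π * _ := by rw [← mul_assoc, mul_div_cancel₀ _ hδ.ne']

end LorentzianWeight

section Dirichlet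

lemma memLp_Icc_of_continuousOn {E : Type*} [NormedAddCommGroup E] {a b : ℝ} {f : ℝ → E}
    (hf : ContinuousOn f (Icc a b)) (p : ENNReal) : MemLp f p (volume.restrict (Icc a b)) :=
  memLp_restrict_of_continuousOn isCompact_Icc measurableSet_Icc hf p

variable {E : Type*} [NormedAddCommGroup E] [InnerProductSpace ℝ E] {a b : ℝ}

lemma integrable_Icc_inner {f g : ℝ → E} (hf : ContinuousOn f (Icc a b))
    (hg : ContinuousOn g (Icc a b)) :
    Integrable (fun y ↦ inner ℝ (f y) (g y)) (volume.restrict (Icc a b)) :=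
  (hf.inner (𝕜 := ℝ) hg).integrableOn_Icc

lemma integral_Icc_inner_deriv_add {f f' g g' : ℝ → E} (hab : a ≤ b)
    (hf : ∀ y ∈ Icc a b, HasDerivWithinAt f (f' y) (Icc a b) y)
    (hg : ∀ y ∈ Icc a b, HasDerivWithinAt g (g' y) (Icc a b) y)
    (hf' : ContinuousOn f' (Icc a b)) (hg' : ContinuousOn g' (Icc a b)) :
    ∫ y in Icc a b, (inner ℝ (f y) (g' y) + inner ℝ (f' y) (g y)) =
      inner ℝ (f b) (g b) - inner ℝ (f a) (g a) := by
  have hfc : ContinuousOn f (Icc a b) := fun y hy ↦ (hf y hy).continuousWithinAt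
  have hgc : ContinuousOn g (Icc a b) := fun y hy ↦ (hg y hy).continuousWithinAt
  rw [integral_Icc_eq_integral_Ioc, ← intervalIntegral.integral_of_le hab]
  refine intervalIntegral.integral_eq_sub_of_hasDerivAt_of_le hab (f := fun y ↦ inner ℝ (f y) (g y))
    (by fun_prop) (fun y hy ↦ ?_) (ContinuousOn.intervalIntegrable_of_Icc hab (by fun_prop))
  exact ((hf y (Ioo_subset_Icc_self hy)).inner ℝ (hg y (Ioo_subset_Icc_self hy))).hasDerivAt
    (Icc_mem_nhds hy.1 hy.2)

lemma integral_Icc_inner_deriv_eq_neg {f f' g g' : ℝ → E} (hab : a ≤ b)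
    (hf : ∀ y ∈ Icc a b, HasDerivWithinAt f (f' y) (Icc a b) y)
    (hg : ∀ y ∈ Icc a b, HasDerivWithinAt g (g' y) (Icc a b) y)
    (hf' : ContinuousOn f' (Icc a b)) (hg' : ContinuousOn g' (Icc a b))
    (hga : g a = 0) (hgb : g b = 0) :
    ∫ y in Icc a b, inner ℝ (f' y) (g y) = -∫ y in Icc a b, inner ℝ (f y) (g' y) := by
  have hfc : ContinuousOn f (Icc a b) := fun y hy ↦ (hf y hy).continuousWithinAt
  have hgc : ContinuousOn g (Icc a b) := fun y hy ↦ (hg y hy).continuousWithinAt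
  have h := integral_Icc_inner_deriv_add hab hf hg hf' hg'
  rw [integral_add (integrable_Icc_inner hfc hg') (integrable_Icc_inner hf' hgc), hga, hgb,
    inner_zero_right, inner_zero_right] at h
  linarith

lemma abs_integral_Icc_inner_le {f g : ℝ → E} (hf : ContinuousOn f (Icc a b))
    (hg : ContinuousOn g (Icc a b)) :
    |∫ y in Icc a b, inner ℝ (f y) (g y)| ≤ ‖f‖_L²[a,b] * ‖g‖_L²[a,b] :=
  abs_integral_inner_le_lpNorm_mul_lpNorm (memLp_Icc_of_continuousOn hf 2)
    (memLp_Icc_of_continuousOn hg 2)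

lemma integral_Icc_inner_self {f : ℝ → E} (hf : ContinuousOn f (Icc a b)) :
    ∫ y in Icc a b, inner ℝ (f y) (f y) = ‖f‖_L²[a,b] ^ 2 := by
  simp only [sq_lpNorm_two (memLp_Icc_of_continuousOn hf 2).1, real_inner_self_eq_norm_sq]

lemma sq_lpNorm_le_two_mul_lpNorm_sub_smul_mul_lpNorm_deriv {w w' : ℝ → E} (hab : a ≤ b) (lam : ℝ)
    (hw : ∀ y ∈ Icc a b, HasDerivWithinAt w (w' y) (Icc a b) y) (hw' : ContinuousOn w' (Icc a b))
    (hwa : w a = 0) (hwb : w b = 0) :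
    ‖w‖_L²[a,b] ^ 2 ≤ 2 * (‖fun y ↦ (y - lam) • w y‖_L²[a,b] * ‖w'‖_L²[a,b]) := by
  have hwc : ContinuousOn w (Icc a b) := fun y hy ↦ (hw y hy).continuousWithinAt
  have hlw : ∀ y ∈ Icc a b, HasDerivWithinAt (fun y ↦ (y - lam) • w y)
      ((y - lam) • w' y + w y) (Icc a b) y := fun y hy ↦ by
    simpa using ((hasDerivWithinAt_id y _).sub_const lam).fun_smul (hw y hy)
  have hlwc : ContinuousOn (fun y ↦ (y - lam) • w y) (Icc a b) := by fun_prop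
  have by_parts := integral_Icc_inner_deriv_eq_neg hab hlw hw (by fun_prop) hw' hwa hwb
  have hsymm (y : ℝ) : inner ℝ ((y - lam) • w' y) (w y) = inner ℝ ((y - lam) • w y) (w' y) := by
    rw [real_inner_smul_left, real_inner_smul_left, real_inner_comm]
  simp only [inner_add_left, hsymm] at by_parts
  rw [integral_add (integrable_Icc_inner hlwc hw') (integrable_Icc_inner hwc hwc),
    integral_Icc_inner_self hwc] at by_parts
  have cauchy_schwarz := abs_le.1 (abs_integral_Icc_inner_le hlwc hw')
  linarith [cauchy_schwarz.1]

lemma sq_norm_le_two_mul_lpNorm_mul_lpNorm_deriv {f f' : ℝ → E}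
    (hf : ∀ y ∈ Icc a b, HasDerivWithinAt f (f' y) (Icc a b) y) (hf' : ContinuousOn f' (Icc a b))
    (hfa : f a = 0) {y : ℝ} (hy : y ∈ Icc a b) :
    ‖f y‖ ^ 2 ≤ 2 * (‖f‖_L²[a,b] * ‖f'‖_L²[a,b]) := by
  have hfc : ContinuousOn f (Icc a b) := fun y hy ↦ (hf y hy).continuousWithinAt
  have hsub : Icc a y ⊆ Icc a b := Icc_subset_Icc_right hy.2
  have hf_mono : ∀ z ∈ Icc a y, HasDerivWithinAt f (f' z) (Icc a y) z :=
    fun z hz ↦ (hf z (hsub hz)).mono hsub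
  have ftc := integral_Icc_inner_deriv_add hy.1 hf_mono hf_mono (hf'.mono hsub) (hf'.mono hsub)
  have hint : IntegrableOn (fun z ↦ 2 * (‖f z‖ * ‖f' z‖)) (Icc a b) :=
    ContinuousOn.integrableOn_Icc (by fun_prop)
  have cauchy_schwarz : ∫ z in Icc a b, ‖f z‖ * ‖f' z‖ ≤ ‖f‖_L²[a,b] * ‖f'‖_L²[a,b] := by
    have h := abs_integral_Icc_inner_le hf'.norm hfc.norm
    rw [lpNorm_norm (memLp_Icc_of_continuousOn hfc 2).1,
      lpNorm_norm (memLp_Icc_of_continuousOn hf' 2).1] at h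
    simpa [mul_comm] using (le_abs_self _).trans h
  calc ‖f y‖ ^ 2 = ∫ z in Icc a y, (inner ℝ (f z) (f' z) + inner ℝ (f' z) (f z)) := by
        rw [ftc, hfa, inner_zero_right, sub_zero, real_inner_self_eq_norm_sq]
    _ ≤ ∫ z in Icc a y, 2 * (‖f z‖ * ‖f' z‖) := by
        refine setIntegral_mono (IntegrableOn.mono_set ?_ hsub) (hint.mono_set hsub) fun z ↦ ?_
        · exact (integrable_Icc_inner hfc hf').add (integrable_Icc_inner hf' hfc)
        · linarith [real_inner_le_norm (f z) (f' z), real_inner_comm (f z) (f' z)]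
    _ ≤ ∫ z in Icc a b, 2 * (‖f z‖ * ‖f' z‖) :=
        setIntegral_mono_set hint (.of_forall fun z ↦ by positivity) hsub.eventuallyLE
    _ ≤ 2 * (‖f‖_L²[a,b] * ‖f'‖_L²[a,b]) := by
        rw [integral_const_mul]
        gcongr

end Dirichlet

/-- `f` is of class `C²` on `[a, b]`, with first and second derivatives `f'` and `f''` (one-sided
at the end points), and satisfies the Dirichlet condition `f a = f b = 0`. -/
structure IsC2Dirichlet {E : Type*} [NormedAddCommGroup E] [NormedSpace ℝ E] (a b : ℝ)
    (f f' f'' : ℝ → E) : Prop where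
  hasDerivWithinAt : ∀ y ∈ Icc a b, HasDerivWithinAt f (f' y) (Icc a b) y
  hasDerivWithinAt_deriv : ∀ y ∈ Icc a b, HasDerivWithinAt f' (f'' y) (Icc a b) y
  continuousOn_deriv2 : ContinuousOn f'' (Icc a b)
  left : f a = 0
  right : f b = 0

namespace IsC2Dirichlet

section NormedSpace

variable {E : Type*} [NormedAddCommGroup E] [NormedSpace ℝ E] {a b : ℝ} {f f' f'' : ℝ → E}

lemma continuousOn (hf : IsC2Dirichlet a b f f' f'') : ContinuousOn f (Icc a b) :=
  fun y hy ↦ (hf.hasDerivWithinAt y hy).continuousWithinAt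

lemma continuousOn_deriv (hf : IsC2Dirichlet a b f f' f'') : ContinuousOn f' (Icc a b) :=
  fun y hy ↦ (hf.hasDerivWithinAt_deriv y hy).continuousWithinAt

lemma of_contDiff (hf : ContDiff ℝ 2 f) (hfa : f a = 0) (hfb : f b = 0) :
    IsC2Dirichlet a b f (deriv f) (deriv (deriv f)) where
  hasDerivWithinAt y _ := (hf.differentiable two_ne_zero y).hasDerivAt.hasDerivWithinAt
  hasDerivWithinAt_deriv y _ :=
    ((hf.deriv' (n := 1)).differentiable one_ne_zero y).hasDerivAt.hasDerivWithinAt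
  continuousOn_deriv2 := ((hf.deriv' (n := 1)).continuous_deriv le_rfl).continuousOn
  left := hfa
  right := hfb

end NormedSpace

variable {E : Type*} [NormedAddCommGroup E] [InnerProductSpace ℝ E] {a b : ℝ}

lemma integral_inner_deriv2_self {f f' f'' : ℝ → E} (hab : a ≤ b)
    (hf : IsC2Dirichlet a b f f' f'') :
    ∫ y in Icc a b, inner ℝ (f'' y) (f y) = -‖f'‖_L²[a,b] ^ 2 := by
  rw [integral_Icc_inner_deriv_eq_neg hab hf.hasDerivWithinAt_deriv hf.hasDerivWithinAt
    hf.continuousOn_deriv2 hf.continuousOn_deriv hf.left hf.right,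
    integral_Icc_inner_self hf.continuousOn_deriv]

variable {φ φ' φ'' w : ℝ → E} {k : ℝ}

lemma energy_eq_neg_integral_inner (hab : a ≤ b) (hφ : IsC2Dirichlet a b φ φ' φ'')
    (hw : ∀ y ∈ Icc a b, φ'' y - k ^ 2 • φ y = w y) :
    ‖φ'‖_L²[a,b] ^ 2 + k ^ 2 * ‖φ‖_L²[a,b] ^ 2 = -∫ y in Icc a b, inner ℝ (w y) (φ y) := by
  have hint := integrable_Icc_inner hφ.continuousOn_deriv2 hφ.continuousOn
  have hint_self := integrable_Icc_inner hφ.continuousOn hφ.continuousOn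
  rw [setIntegral_congr_fun (g := fun y ↦ inner ℝ (φ'' y) (φ y) - k ^ 2 * inner ℝ (φ y) (φ y))
    measurableSet_Icc fun y hy ↦ by simp only [← hw y hy, inner_sub_left, real_inner_smul_left],
    integral_sub hint (hint_self.const_mul _), integral_const_mul,
    hφ.integral_inner_deriv2_self hab, integral_Icc_inner_self hφ.continuousOn]
  ring

lemma abs_mul_energy_le_sq_lpNorm_one (hab : a ≤ b) (hφ : IsC2Dirichlet a b φ φ' φ'')
    (hw : ∀ y ∈ Icc a b, φ'' y - k ^ 2 • φ y = w y) :
    |k| * (‖φ'‖_L²[a,b] ^ 2 + k ^ 2 * ‖φ‖_L²[a,b] ^ 2) ≤ ‖w‖_L¹[a,b] ^ 2 := by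
  set U := ‖φ'‖_L²[a,b] ^ 2 + k ^ 2 * ‖φ‖_L²[a,b] ^ 2 with hU
  set M := √(2 * (‖φ‖_L²[a,b] * ‖φ'‖_L²[a,b]))
  have hwc : ContinuousOn w (Icc a b) :=
    (hφ.continuousOn_deriv2.sub (hφ.continuousOn.const_smul (k ^ 2))).congr
      fun y hy ↦ (hw y hy).symm
  have norm_le : ∀ y ∈ Icc a b, ‖φ y‖ ≤ M := fun y hy ↦ Real.le_sqrt_of_sq_le <|
    sq_norm_le_two_mul_lpNorm_mul_lpNorm_deriv hφ.hasDerivWithinAt hφ.continuousOn_deriv hφ.left hy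
  have energy_le : U ≤ ‖w‖_L¹[a,b] * M := by
    rw [hU, hφ.energy_eq_neg_integral_inner hab hw, ← integral_neg,
      lpNorm_one_eq_integral_norm (memLp_Icc_of_continuousOn hwc 1).1, ← integral_mul_const]
    refine setIntegral_mono_on (integrable_Icc_inner hwc hφ.continuousOn).neg
      (hwc.norm.integrableOn_Icc.mul_const M) measurableSet_Icc fun y hy ↦ ?_
    calc -inner ℝ (w y) (φ y) ≤ ‖w y‖ * ‖φ y‖ :=
          (neg_le_abs _).trans (abs_real_inner_le_norm _ _)
      _ ≤ ‖w y‖ * M := by gcongr; exact norm_le y hy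
  have abs_mul_sq_le : |k| * M ^ 2 ≤ U := by
    have h := two_mul_le_add_sq ‖φ'‖_L²[a,b] (|k| * ‖φ‖_L²[a,b])
    rw [mul_pow, sq_abs] at h
    rw [Real.sq_sqrt (mul_nonneg zero_le_two (mul_nonneg lpNorm_nonneg lpNorm_nonneg))]
    linarith
  have hU₀ : 0 ≤ U := by positivity
  rcases hU₀.eq_or_lt with hU₀ | hU₀
  · rw [← hU₀, mul_zero]
    positivity
  · refine le_of_mul_le_mul_right ?_ hU₀
    calc |k| * U * U = |k| * U ^ 2 := by ring
      _ ≤ |k| * (‖w‖_L¹[a,b] * M) ^ 2 := by gcongr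
      _ = ‖w‖_L¹[a,b] ^ 2 * (|k| * M ^ 2) := by ring
      _ ≤ ‖w‖_L¹[a,b] ^ 2 * U := by gcongr

end IsC2Dirichlet

lemma le_of_couette_inequalities {a b x G : ℝ} (ha : 0 ≤ a) (hb : 0 ≤ b) (hG : 0 ≤ G)
    (hb_sq : b ^ 2 ≤ G * a) (hx_sq : x ^ 2 ≤ G * x + a * b) (ha_sq : a ^ 2 ≤ 2 * (x * b)) :
    a ≤ 5 * G ∧ b ≤ 3 * G ∧ x ≤ 5 * G := by
  have two_b_le : 2 * b ≤ G + a := by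
    refine le_of_sq_le_sq ?_ (by positivity)
    linarith [sq_nonneg (G - a)]
  have x_sq_le : x ^ 2 ≤ G ^ 2 + 2 * (a * b) := by linarith [sq_nonneg (x - G)]
  have a_cube_le : a ^ 3 ≤ 4 * G * x ^ 2 := by
    rcases ha.eq_or_lt with rfl | ha
    · norm_num; positivity
    refine le_of_mul_le_mul_right ?_ ha
    calc a ^ 3 * a = (a ^ 2) ^ 2 := by ring
      _ ≤ (2 * (x * b)) ^ 2 := by gcongr
      _ = 4 * x ^ 2 * b ^ 2 := by ring
      _ ≤ 4 * x ^ 2 * (G * a) := by gcongr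
      _ = 4 * G * x ^ 2 * a := by ring
  have a_le : a ≤ 5 * G := by
    have h : a ^ 3 ≤ 4 * G ^ 3 + 4 * G ^ 2 * a + 4 * G * a ^ 2 := by
      calc a ^ 3 ≤ 4 * G * (G ^ 2 + a * (2 * b)) := a_cube_le.trans (by gcongr; linarith)
        _ ≤ 4 * G * (G ^ 2 + a * (G + a)) := by gcongr
        _ = _ := by ring
    by_contra! hlt
    have hGa : G ≤ a / 5 := by linarith
    have : a ^ 3 ≤ 124 / 125 * a ^ 3 := by
      calc a ^ 3 ≤ 4 * (a / 5) ^ 3 + 4 * (a / 5) ^ 2 * a + 4 * (a / 5) * a ^ 2 :=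
            h.trans (by gcongr)
        _ = 124 / 125 * a ^ 3 := by ring
    linarith [pow_pos (show 0 < a by linarith) 3]
  have b_le : b ≤ 3 * G := by linarith
  refine ⟨a_le, b_le, ?_⟩
  refine abs_le_of_sq_le_sq' ?_ (by positivity) |>.2
  nlinarith [mul_le_mul a_le b_le hb (by positivity)]

lemma pow_rpow_eq_pow {x r : ℝ} {m n : ℕ} (hx : 0 ≤ x) (h : m * r = n) : (x ^ m) ^ r = x ^ n := by
  rw [← Real.rpow_natCast, ← Real.rpow_mul hx, h, Real.rpow_natCast]

section Couette

variable {E : Type*} [NormedAddCommGroup E] [InnerProductSpace ℂ E]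

attribute [local instance] InnerProductSpace.complexToReal

/-- The linearized operator `-ν (∂² - k²) + i k (y - λ)` around the Couette flow, shifted by the
spectral parameter `λ` and acting on `w`, whose second derivative `w''` is passed separately. -/
noncomputable def couetteOp (ν k lam : ℝ) (w w'' : ℝ → E) (y : ℝ) : E :=
  -(ν • (w'' y - k ^ 2 • w y)) + (k * (y - lam)) • (Complex.I • w y)

variable {a b ν k lam : ℝ} {w w' w'' : ℝ → E}

lemma inner_self_I_smul (x : E) : inner ℝ x (Complex.I • x) = 0 :=
  real_inner_I_smul_self (𝕜 := ℂ) x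

lemma inner_I_smul_I_smul (x y : E) :
    inner ℝ (Complex.I • x) (Complex.I • y) = inner ℝ x y := by
  simp [real_inner_eq_re_inner ℂ, inner_smul_left, inner_smul_right, ← mul_assoc]

lemma inner_couetteOp_self (y : ℝ) :
    inner ℝ (couetteOp ν k lam w w'' y) (w y) =
      -ν * inner ℝ (w'' y) (w y) + ν * k ^ 2 * inner ℝ (w y) (w y) := by
  simp only [couetteOp, inner_add_left, inner_neg_left, real_inner_smul_left, inner_sub_left,
    real_inner_comm (w y) (Complex.I • w y), inner_self_I_smul]
  ring

lemma inner_couetteOp_smul_I_smul (y : ℝ) :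
    inner ℝ (couetteOp ν k lam w w'' y) ((y - lam) • (Complex.I • w y)) =
      -ν * inner ℝ (w'' y) ((y - lam) • (Complex.I • w y))
        + k * inner ℝ ((y - lam) • w y) ((y - lam) • w y) := by
  simp only [couetteOp, inner_add_left, inner_neg_left, real_inner_smul_left, inner_sub_left,
    real_inner_smul_right, inner_self_I_smul, inner_I_smul_I_smul]
  ring

namespace IsC2Dirichlet

lemma continuousOn_couetteOp (ν k lam : ℝ) (hw : IsC2Dirichlet a b w w' w'') :
    ContinuousOn (couetteOp ν k lam w w'') (Icc a b) := by
  have := hw.continuousOn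
  have := hw.continuousOn_deriv2
  unfold couetteOp
  fun_prop

lemma mul_energy_le_lpNorm_couetteOp_mul (hab : a ≤ b) (hw : IsC2Dirichlet a b w w' w'') :
    ν * (‖w'‖_L²[a,b] ^ 2 + k ^ 2 * ‖w‖_L²[a,b] ^ 2) ≤
      ‖couetteOp ν k lam w w''‖_L²[a,b] * ‖w‖_L²[a,b] := by
  refine le_of_eq_of_le ?_ <| (le_abs_self _).trans <|
    abs_integral_Icc_inner_le (hw.continuousOn_couetteOp _ _ _) hw.continuousOn
  have hint := integrable_Icc_inner hw.continuousOn_deriv2 hw.continuousOn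
  have hint_self := integrable_Icc_inner hw.continuousOn hw.continuousOn
  simp only [inner_couetteOp_self]
  rw [integral_add (hint.const_mul _) (hint_self.const_mul _), integral_const_mul,
    integral_const_mul, hw.integral_inner_deriv2_self hab, integral_Icc_inner_self hw.continuousOn]
  ring

lemma integral_inner_deriv2_smul_I_smul (hab : a ≤ b) (lam : ℝ) (hw : IsC2Dirichlet a b w w' w'') :
    ∫ y in Icc a b, inner ℝ (w'' y) ((y - lam) • (Complex.I • w y)) =
      -∫ y in Icc a b, inner ℝ (w' y) (Complex.I • w y) := by
  have hwc := hw.continuousOn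
  have hw'c := hw.continuousOn_deriv
  have hderiv : ∀ y ∈ Icc a b, HasDerivWithinAt (fun y ↦ (y - lam) • (Complex.I • w y))
      ((y - lam) • (Complex.I • w' y) + Complex.I • w y) (Icc a b) y := fun y hy ↦ by
    simpa using ((hasDerivWithinAt_id y _).sub_const lam).fun_smul
      ((hw.hasDerivWithinAt y hy).const_smul Complex.I)
  rw [integral_Icc_inner_deriv_eq_neg hab hw.hasDerivWithinAt_deriv hderiv hw.continuousOn_deriv2
    (by fun_prop) (by simp [hw.left]) (by simp [hw.right])]
  simp only [inner_add_right, real_inner_smul_right, inner_self_I_smul, mul_zero, zero_add]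

lemma abs_mul_sq_lpNorm_sub_smul_le (hab : a ≤ b) (hw : IsC2Dirichlet a b w w' w'') :
    |k| * ‖fun y ↦ (y - lam) • w y‖_L²[a,b] ^ 2 ≤
      ‖couetteOp ν k lam w w''‖_L²[a,b] * ‖fun y ↦ (y - lam) • w y‖_L²[a,b]
        + |ν| * (‖w'‖_L²[a,b] * ‖w‖_L²[a,b]) := by
  have hwc := hw.continuousOn
  have hw''c := hw.continuousOn_deriv2
  have hlwc : ContinuousOn (fun y ↦ (y - lam) • w y) (Icc a b) := by fun_prop
  have hilwc : ContinuousOn (fun y ↦ (y - lam) • (Complex.I • w y)) (Icc a b) := by fun_prop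
  have identity : k * ‖fun y ↦ (y - lam) • w y‖_L²[a,b] ^ 2 =
      (∫ y in Icc a b, inner ℝ (couetteOp ν k lam w w'' y) ((y - lam) • (Complex.I • w y)))
        - ν * ∫ y in Icc a b, inner ℝ (w' y) (Complex.I • w y) := by
    simp only [inner_couetteOp_smul_I_smul]
    rw [integral_add ((integrable_Icc_inner hw''c hilwc).const_mul _)
      ((integrable_Icc_inner hlwc hlwc).const_mul _), integral_const_mul, integral_const_mul,
      hw.integral_inner_deriv2_smul_I_smul hab, integral_Icc_inner_self hlwc]
    ring
  have lpNorm_I_smul (f : ℝ → E) : ‖fun y ↦ Complex.I • f y‖_L²[a,b] = ‖f‖_L²[a,b] :=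
    (lpNorm_const_smul Complex.I f _).trans (by simp)
  have pairing_le := abs_integral_Icc_inner_le (hw.continuousOn_couetteOp ν k lam) hilwc
  simp only [smul_comm _ Complex.I, lpNorm_I_smul] at pairing_le
  have viscous_le := abs_integral_Icc_inner_le hw.continuousOn_deriv (hwc.fun_const_smul Complex.I)
  rw [lpNorm_I_smul] at viscous_le
  rw [← abs_of_nonneg (sq_nonneg ‖fun y ↦ (y - lam) • w y‖_L²[a,b]), ← abs_mul, identity]
  refine (abs_sub _ _).trans ?_
  rw [abs_mul]
  simp only [smul_comm _ Complex.I]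
  gcongr

variable {p q : ℝ}

lemma scaled_lpNorm_two_le (hab : a ≤ b) (hk : |k| = q ^ 6)
    (hw : IsC2Dirichlet a b w w' w'') :
    p ^ 2 * q ^ 4 * ‖w‖_L²[a,b] ≤ 5 * ‖couetteOp (p ^ 6) k lam w w''‖_L²[a,b] ∧
      p ^ 4 * q ^ 2 * ‖w'‖_L²[a,b] ≤ 3 * ‖couetteOp (p ^ 6) k lam w w''‖_L²[a,b] ∧
      q ^ 6 * ‖fun y ↦ (y - lam) • w y‖_L²[a,b] ≤
        5 * ‖couetteOp (p ^ 6) k lam w w''‖_L²[a,b] := by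
  have hA : 0 ≤ ‖w‖_L²[a,b] := lpNorm_nonneg
  have hB : 0 ≤ ‖w'‖_L²[a,b] := lpNorm_nonneg
  have dissipation := hw.mul_energy_le_lpNorm_couetteOp_mul hab (ν := p ^ 6) (k := k) (lam := lam)
  have transport := hw.abs_mul_sq_lpNorm_sub_smul_le hab (ν := p ^ 6) (k := k) (lam := lam)
  have uncertainty := sq_lpNorm_le_two_mul_lpNorm_sub_smul_mul_lpNorm_deriv hab lam
    hw.hasDerivWithinAt hw.continuousOn_deriv hw.left hw.right
  rw [hk, abs_of_nonneg (by positivity)] at transport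
  refine le_of_couette_inequalities (by positivity) (by positivity) lpNorm_nonneg ?_ ?_ ?_
  · have : 0 ≤ p ^ 6 * (k ^ 2 * ‖w‖_L²[a,b] ^ 2) := by positivity
    linear_combination p ^ 2 * q ^ 4 * (dissipation + this)
  · linear_combination q ^ 6 * transport
  · linear_combination p ^ 4 * q ^ 8 * uncertainty

lemma scaled_lpNorm_one_le (hab : a ≤ b) (hp : 0 < p) (hq : 0 < q) (hk : |k| = q ^ 6)
    (hw : IsC2Dirichlet a b w w' w'') :
    p * q ^ 5 * ‖w‖_L¹[a,b] ≤ 15 * ‖couetteOp (p ^ 6) k lam w w''‖_L²[a,b] := by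
  obtain ⟨hA, -, hX⟩ := hw.scaled_lpNorm_two_le hab hk (lam := lam)
  have hwc := hw.continuousOn
  have hlwc : ContinuousOn (fun y ↦ (y - lam) • w y) (Icc a b) := by fun_prop
  have weighted := mul_sq_lpNorm_one_le (δ := p ^ 2 / q ^ 2) (by positivity)
    (memLp_Icc_of_continuousOn hwc 2) (memLp_Icc_of_continuousOn hlwc 2)
  set A := ‖w‖_L²[a,b]
  set X := ‖fun y ↦ (y - lam) • w y‖_L²[a,b]
  set G := ‖couetteOp (p ^ 6) k lam w w''‖_L²[a,b]
  have hA₀ : 0 ≤ A := lpNorm_nonneg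
  have hX₀ : 0 ≤ X := lpNorm_nonneg
  have hG₀ : 0 ≤ G := lpNorm_nonneg
  refine le_of_sq_le_sq ?_ (by positivity)
  calc (p * q ^ 5 * ‖w‖_L¹[a,b]) ^ 2
      = q ^ 12 * (p ^ 2 / q ^ 2 * ‖w‖_L¹[a,b] ^ 2) := by field_simp
    _ ≤ q ^ 12 * (Real.pi * (X ^ 2 + (p ^ 2 / q ^ 2) ^ 2 * A ^ 2)) := by gcongr
    _ = Real.pi * ((q ^ 6 * X) ^ 2 + (p ^ 2 * q ^ 4 * A) ^ 2) := by field_simp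
    _ ≤ 4 * ((5 * G) ^ 2 + (5 * G) ^ 2) := by gcongr; exact Real.pi_le_four
    _ ≤ (15 * G) ^ 2 := by linarith [sq_nonneg G]

lemma scaled_energy_le {φ φ' φ'' : ℝ → E} (hab : a ≤ b) (hp : 0 < p) (hq : 0 < q)
    (hk : |k| = q ^ 6) (hw : IsC2Dirichlet a b w w' w'') (hφ : IsC2Dirichlet a b φ φ' φ'')
    (hφw : ∀ y ∈ Icc a b, φ'' y - k ^ 2 • φ y = w y) :
    p * q ^ 8 * √(‖φ'‖_L²[a,b] ^ 2 + k ^ 2 * ‖φ‖_L²[a,b] ^ 2) ≤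
      15 * ‖couetteOp (p ^ 6) k lam w w''‖_L²[a,b] := by
  have energy_le : q ^ 3 * √(‖φ'‖_L²[a,b] ^ 2 + k ^ 2 * ‖φ‖_L²[a,b] ^ 2) ≤ ‖w‖_L¹[a,b] := by
    refine le_of_sq_le_sq ?_ lpNorm_nonneg
    rw [mul_pow, Real.sq_sqrt (by positivity), ← pow_mul, ← hk]
    exact hφ.abs_mul_energy_le_sq_lpNorm_one hab hφw
  calc p * q ^ 8 * √(‖φ'‖_L²[a,b] ^ 2 + k ^ 2 * ‖φ‖_L²[a,b] ^ 2)
      = p * q ^ 5 * (q ^ 3 * √(‖φ'‖_L²[a,b] ^ 2 + k ^ 2 * ‖φ‖_L²[a,b] ^ 2)) := by ring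
    _ ≤ p * q ^ 5 * ‖w‖_L¹[a,b] := by gcongr
    _ ≤ _ := hw.scaled_lpNorm_one_le hab hp hq hk

end IsC2Dirichlet

theorem statement0_general {φ φ' φ'' : ℝ → E} (hab : a ≤ b) (hν : 0 < ν)
    (hw : IsC2Dirichlet a b w w' w'') (hφ : IsC2Dirichlet a b φ φ' φ'')
    (hφw : ∀ y ∈ Icc a b, φ'' y - k ^ 2 • φ y = w y) :
    ν ^ (1 / 6 : ℝ) * |k| ^ (4 / 3 : ℝ) * √(‖φ'‖_L²[a,b] ^ 2 + k ^ 2 * ‖φ‖_L²[a,b] ^ 2)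
        + ν ^ (1 / 6 : ℝ) * |k| ^ (5 / 6 : ℝ) * ‖w‖_L¹[a,b]
        + ν ^ (2 / 3 : ℝ) * |k| ^ (1 / 3 : ℝ) * ‖w'‖_L²[a,b]
        + (ν * k ^ 2) ^ (1 / 3 : ℝ) * ‖w‖_L²[a,b]
        + |k| * ‖fun y ↦ (y - lam) • w y‖_L²[a,b] ≤
      43 * ‖couetteOp ν k lam w w''‖_L²[a,b] := by
  rcases eq_or_ne k 0 with rfl | hk
  · simp [Real.zero_rpow, lpNorm_nonneg]
  have exists_sixth_root {x : ℝ} (hx : 0 < x) : ∃ y > 0, x = y ^ 6 :=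
    ⟨x ^ (6 : ℝ)⁻¹, by positivity, (Real.rpow_inv_natCast_pow hx.le (by norm_num)).symm⟩
  obtain ⟨p, hp, rfl⟩ := exists_sixth_root hν
  obtain ⟨q, hq, hkq⟩ := exists_sixth_root (abs_pos.2 hk)
  have hpkq : p ^ 6 * k ^ 2 = (p * q ^ 2) ^ 6 := by rw [← sq_abs, hkq]; ring
  rw [hpkq, hkq, pow_rpow_eq_pow (n := 1) hp.le (by norm_num),
    pow_rpow_eq_pow (n := 8) hq.le (by norm_num), pow_rpow_eq_pow (n := 5) hq.le (by norm_num),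
    pow_rpow_eq_pow (n := 4) hp.le (by norm_num), pow_rpow_eq_pow (n := 2) hq.le (by norm_num),
    pow_rpow_eq_pow (n := 2) (by positivity) (by norm_num)]
  obtain ⟨hA, hB, hX⟩ := hw.scaled_lpNorm_two_le hab hkq (lam := lam)
  have hL := hw.scaled_lpNorm_one_le hab hp hq hkq (lam := lam)
  have hU := hw.scaled_energy_le hab hp hq hkq hφ hφw (lam := lam)
  linear_combination hU + hL + hB + hA + hX

end Couette

lemma couetteOp_complex (ν lam : ℝ) (k : ℤ) (w w'' : ℝ → ℂ) :
    couetteOp ν k lam w w'' = fun y : ℝ ↦ -(ν : ℂ) * (w'' y - (k : ℂ) ^ 2 * w y)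
      + Complex.I * (k : ℂ) * ((y : ℂ) - (lam : ℂ)) * w y := by
  ext y
  simp only [couetteOp, Complex.real_smul, smul_eq_mul]
  push_cast
  ring

lemma nL1_eq_lpNorm {f : ℝ → ℂ} (hf : ContinuousOn f (Icc (-1) 1)) : nL1 f = ‖f‖_L¹[-1,1] :=
  (lpNorm_one_eq_integral_norm (memLp_Icc_of_continuousOn hf 1).1).symm

lemma nL2_eq_lpNorm {f : ℝ → ℂ} (hf : ContinuousOn f (Icc (-1) 1)) : nL2 f = ‖f‖_L²[-1,1] := by
  rw [nL2, ← sq_lpNorm_two (memLp_Icc_of_continuousOn hf 2).1, ← Real.sqrt_eq_rpow,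
    Real.sqrt_sq lpNorm_nonneg]

/-- Resolvent estimate for the linearized operator around Couette, Navier-slip boundary
conditions, real spectral parameter `λ`. -/
theorem statement0 :
    ∃ C : ℝ, 0 < C ∧
      ∀ (ν : ℝ) (k : ℤ) (lam : ℝ) (w φ F : ℝ → ℂ),
        0 < ν → ν ≤ 1 → 1 ≤ |k| →
        ContDiff ℝ 2 w → w (-1) = 0 → w 1 = 0 →
        (F = fun y : ℝ => -(ν : ℂ) * (deriv (deriv w) y - (k:ℂ)^2 * w y)
            + Complex.I * (k:ℂ) * ((y:ℂ) - (lam:ℂ)) * w y) →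
        ContDiff ℝ 2 φ →
        (∀ y ∈ Set.Icc (-1:ℝ) 1, deriv (deriv φ) y - (k:ℂ)^2 * φ y = w y) →
        φ (-1) = 0 → φ 1 = 0 →
        ν ^ ((1:ℝ)/6) * |(k:ℝ)| ^ ((4:ℝ)/3) *
            ((nL2 (deriv φ) ^ 2 + (k:ℝ)^2 * nL2 φ ^ 2) ^ ((1:ℝ)/2))
          + ν ^ ((1:ℝ)/6) * |(k:ℝ)| ^ ((5:ℝ)/6) * nL1 w
          + ν ^ ((2:ℝ)/3) * |(k:ℝ)| ^ ((1:ℝ)/3) * nL2 (deriv w)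
          + (ν * (k:ℝ)^2) ^ ((1:ℝ)/3) * nL2 w
          + |(k:ℝ)| * nL2 (fun y : ℝ => ((y:ℂ) - (lam:ℂ)) * w y)
          ≤ C * nL2 F := by
  refine ⟨43, by norm_num, fun ν k lam w φ F hν _ _ hw hwl hwr hF hφ hφw hφl hφr ↦ ?_⟩
  have hw : IsC2Dirichlet (-1) 1 w _ _ := .of_contDiff hw hwl hwr
  have hφ : IsC2Dirichlet (-1) 1 φ _ _ := .of_contDiff hφ hφl hφr
  have hlw : ContinuousOn (fun y : ℝ ↦ ((y : ℂ) - lam) * w y) (Icc (-1) 1) := by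
    have := hw.continuousOn
    fun_prop
  rw [hF, ← couetteOp_complex, nL2_eq_lpNorm (hw.continuousOn_couetteOp ν k lam),
    nL2_eq_lpNorm hφ.continuousOn, nL2_eq_lpNorm hφ.continuousOn_deriv,
    nL1_eq_lpNorm hw.continuousOn, nL2_eq_lpNorm hw.continuousOn,
    nL2_eq_lpNorm hw.continuousOn_deriv, nL2_eq_lpNorm hlw, ← Real.sqrt_eq_rpow]
  simpa using statement0_general (k := k) (lam := lam) (by norm_num) hν hw hφ
    fun y hy ↦ by simpa using hφw y hy
end

section
/- There exist constants ε₀ ∈ (0,1) and C > 0 with the following property. Let ν ∈ (0,1], k ∈ ℤ with |k| ≥ 1, ε ∈ (0, ε₀], and λ ∈ ℝ. Let w : [−1,1] → ℂ be twice continuously differentiable with w(−1) = w(1) = 0, and set F(y) = −ν(w''(y) − k²w(y)) + ik(y−λ)w(y) − ε·ν^{1/3}|k|^{2/3}w(y). If M ≥ 0 dominates F in H^{−1}, then ν‖w'‖_{L²} + ν^{2/3}|k|^{1/3}‖w‖_{L²} ≤ C·M. -/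
/-- The `L²` pairing of two functions on the interval `[-1,1]`. -/
noncomputable def innI (f g : ℝ → ℂ) : ℂ :=
  ∫ y in Set.Icc (-1:ℝ) 1, f y * (starRingEnd ℂ) (g y)

/-- `M ≥ 0` dominates `F` in `H^{-1}` : `|⟨F, φ⟩| ≤ M ‖φ‖_{H¹}` for every `C¹` function
vanishing at `±1`. -/
def Dominates (F : ℝ → ℂ) (M : ℝ) : Prop :=
  ∀ g : ℝ → ℂ, ContDiff ℝ 1 g → g (-1) = 0 → g 1 = 0 →
    ‖innI F g‖ ≤ M * ((nL2 g ^ 2 + nL2 (deriv g) ^ 2) ^ ((1:ℝ)/2))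

open MeasureTheory Set
open scoped ComplexConjugate

/-- The `H¹` norm of a function on the interval `[-1,1]`, in the form in which it occurs in
`Dominates`. -/
noncomputable def nH1 (f : ℝ → ℂ) : ℝ :=
  (nL2 f ^ 2 + nL2 (deriv f) ^ 2) ^ ((1 : ℝ) / 2)

/-- The resolvent operator `-ν(∂² - k²) + ik(y - λ) - μ` of the vorticity equation, linearized
around the Couette flow at horizontal frequency `k`. Here `k` may be any real number. -/
noncomputable def couetteResolvent (ν k lam μ : ℝ) (w : ℝ → ℂ) (y : ℝ) : ℂ :=
  -(ν : ℂ) * (deriv (deriv w) y - (k : ℂ) ^ 2 * w y)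
    + Complex.I * (k : ℂ) * ((y : ℂ) - (lam : ℂ)) * w y - (μ : ℂ) * w y

/-- The profile `t / (1 + t²)` of the multiplier tested against near the critical layer: a smooth
odd function for which the pairing with the shear, `t * layerProfile t`, is bounded and coercive
away from `t = 0`. -/
noncomputable def layerProfile (t : ℝ) : ℝ := t / (1 + t ^ 2)

/-- The multiplier `layerProfile`, rescaled to a critical layer of width `δ` around `y = λ`. -/
noncomputable def layerMultiplier (δ lam y : ℝ) : ℝ := layerProfile ((y - lam) / δ)

section Norms

lemma nL2_nonneg (f : ℝ → ℂ) : 0 ≤ nL2 f :=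
  Real.rpow_nonneg (integral_nonneg fun _ => by positivity) _

lemma nL2_sq (f : ℝ → ℂ) : nL2 f ^ 2 = ∫ y in (-1 : ℝ)..1, ‖f y‖ ^ 2 := by
  rw [nL2, ← Real.sqrt_eq_rpow, Real.sq_sqrt (integral_nonneg fun _ => by positivity),
    integral_Icc_eq_integral_Ioc, intervalIntegral.integral_of_le (by norm_num)]

lemma innI_eq_intervalIntegral (f g : ℝ → ℂ) :
    innI f g = ∫ y in (-1 : ℝ)..1, f y * conj (g y) := by
  rw [innI, integral_Icc_eq_integral_Ioc, intervalIntegral.integral_of_le (by norm_num)]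

lemma nH1_nonneg (f : ℝ → ℂ) : 0 ≤ nH1 f :=
  Real.rpow_nonneg (by positivity) _

lemma nH1_sq (f : ℝ → ℂ) : nH1 f ^ 2 = nL2 f ^ 2 + nL2 (deriv f) ^ 2 := by
  rw [nH1, ← Real.sqrt_eq_rpow, Real.sq_sqrt (by positivity)]

lemma nL2_deriv_le_nH1 (f : ℝ → ℂ) : nL2 (deriv f) ≤ nH1 f := by
  refine le_of_sq_le_sq ?_ (nH1_nonneg f)
  rw [nH1_sq]
  exact le_add_of_nonneg_left (sq_nonneg _)

lemma memLp_two_restrict_Icc_of_continuous {E : Type*} [NormedAddCommGroup E] {f : ℝ → E}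
    (hf : Continuous f) (a b : ℝ) :
    MemLp f 2 (volume.restrict (Icc a b)) :=
  (memLp_two_iff_integrable_sq_norm hf.aestronglyMeasurable).2
    (Continuous.integrableOn_Icc (by fun_prop))

lemma integral_norm_mul_norm_le {f g : ℝ → ℂ} (hf : MemLp f 2 (volume.restrict (Icc (-1) 1)))
    (hg : MemLp g 2 (volume.restrict (Icc (-1) 1))) :
    ∫ y in (-1 : ℝ)..1, ‖f y‖ * ‖g y‖ ≤ nL2 f * nL2 g := by
  rw [intervalIntegral.integral_of_le (by norm_num), ← integral_Icc_eq_integral_Ioc]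
  simpa [nL2] using
    integral_mul_norm_le_Lp_mul_Lq Real.HolderConjugate.two_two (by simpa using hf)
      (by simpa using hg)

lemma abs_integral_le_mul_nL2_mul_nL2 {f g : ℝ → ℂ} {h : ℝ → ℝ} {c : ℝ} (hf : Continuous f)
    (hg : Continuous g) (hh : ∀ y, |h y| ≤ c * (‖f y‖ * ‖g y‖)) (hc : 0 ≤ c) :
    |∫ y in (-1 : ℝ)..1, h y| ≤ c * (nL2 f * nL2 g) := by
  have hfg : Continuous fun y => c * (‖f y‖ * ‖g y‖) := by fun_prop
  rw [← Real.norm_eq_abs]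
  calc ‖∫ y in (-1 : ℝ)..1, h y‖
    _ ≤ ∫ y in (-1 : ℝ)..1, c * (‖f y‖ * ‖g y‖) :=
        intervalIntegral.norm_integral_le_of_norm_le (neg_le_self zero_le_one)
          (Filter.Eventually.of_forall fun y _ => hh y)
          (hfg.intervalIntegrable _ _)
    _ = c * ∫ y in (-1 : ℝ)..1, ‖f y‖ * ‖g y‖ := intervalIntegral.integral_const_mul _ _
    _ ≤ c * (nL2 f * nL2 g) :=
        mul_le_mul_of_nonneg_left (integral_norm_mul_norm_le
          (memLp_two_restrict_Icc_of_continuous hf _ _)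
          (memLp_two_restrict_Icc_of_continuous hg _ _)) hc

end Norms

section Multipliers

variable {w : ℝ → ℂ} {χ : ℝ → ℝ} {A B : ℝ}

lemma deriv_real_smul {E : Type*} [NormedAddCommGroup E] [NormedSpace ℝ E] {u : ℝ → E}
    (hχ : Differentiable ℝ χ) (hu : Differentiable ℝ u) :
    deriv (fun y => χ y • u y) = fun y => χ y • deriv u y + deriv χ y • u y :=
  funext fun y => deriv_fun_smul (hχ y) (hu y)

lemma norm_sq_smul_add_norm_sq_smul_add_smul_le {E : Type*} [SeminormedAddCommGroup E]
    [NormedSpace ℝ E] {a b : ℝ} (ha : |a| ≤ A) (hb : |b| ≤ B) (u v : E) :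
    ‖a • u‖ ^ 2 + ‖a • v + b • u‖ ^ 2 ≤
      2 * A ^ 2 * (‖u‖ ^ 2 + ‖v‖ ^ 2) + 2 * B ^ 2 * ‖u‖ ^ 2 := by
  have smul_le {c C : ℝ} (hc : |c| ≤ C) (x : E) : ‖c • x‖ ≤ C * ‖x‖ := by
    rw [norm_smul, Real.norm_eq_abs]
    gcongr
  calc ‖a • u‖ ^ 2 + ‖a • v + b • u‖ ^ 2
    _ ≤ (A * ‖u‖) ^ 2 + (A * ‖v‖ + B * ‖u‖) ^ 2 := by
        gcongr
        · exact smul_le ha u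
        · exact norm_add_le_of_le (smul_le ha v) (smul_le hb u)
    _ ≤ _ := by nlinarith [sq_nonneg (A * ‖v‖ - B * ‖u‖), sq_nonneg (A * ‖u‖)]

lemma nH1_smul_le (hχ : ContDiff ℝ 1 χ) (hw : ContDiff ℝ 1 w) (hA : ∀ y, |χ y| ≤ A)
    (hB : ∀ y, |deriv χ y| ≤ B) :
    nH1 (fun y => χ y • w y) ≤ 2 * (A * nH1 w + B * nL2 w) := by
  have _ : Continuous (deriv χ) := hχ.continuous_deriv le_rfl
  have _ : Continuous (deriv w) := hw.continuous_deriv le_rfl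
  have hA0 : 0 ≤ A := (abs_nonneg _).trans (hA 0)
  have hB0 : 0 ≤ B := (abs_nonneg _).trans (hB 0)
  have hsq : nH1 (fun y => χ y • w y) ^ 2 ≤ 2 * A ^ 2 * nH1 w ^ 2 + 2 * B ^ 2 * nL2 w ^ 2 := by
    simp only [nH1_sq, nL2_sq,
      deriv_real_smul (hχ.differentiable one_ne_zero) (hw.differentiable one_ne_zero)]
    rw [← intervalIntegral.integral_add, ← intervalIntegral.integral_add,
      ← intervalIntegral.integral_const_mul, ← intervalIntegral.integral_const_mul,
      ← intervalIntegral.integral_add]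
    · exact intervalIntegral.integral_mono_on (by norm_num)
        (Continuous.intervalIntegrable (by fun_prop) _ _)
        (Continuous.intervalIntegrable (by fun_prop) _ _) fun y _ =>
          norm_sq_smul_add_norm_sq_smul_add_smul_le (hA y) (hB y) _ _
    all_goals exact Continuous.intervalIntegrable (by fun_prop) _ _
  have hAH : 0 ≤ A * nH1 w := mul_nonneg hA0 (nH1_nonneg w)
  have hBN : 0 ≤ B * nL2 w := mul_nonneg hB0 (nL2_nonneg w)
  refine le_of_sq_le_sq (hsq.trans ?_) (by positivity)
  nlinarith [mul_nonneg hAH hBN, sq_nonneg (A * nH1 w), sq_nonneg (B * nL2 w)]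

lemma abs_integral_deriv_mul_norm_sq_le (hχ : ContDiff ℝ 1 χ) (hw : ContDiff ℝ 1 w)
    (hw_left : w (-1) = 0) (hw_right : w 1 = 0) (hA : ∀ y, |χ y| ≤ A) :
    |∫ y in (-1 : ℝ)..1, deriv χ y * ‖w y‖ ^ 2| ≤ 2 * A * (nL2 w * nL2 (deriv w)) := by
  have hχ' : Continuous (deriv χ) := hχ.continuous_deriv le_rfl
  have hw' : Continuous (deriv w) := hw.continuous_deriv le_rfl
  have hA0 : 0 ≤ A := (abs_nonneg _).trans (hA 0)
  have by_parts : ∫ y in (-1 : ℝ)..1, χ y * (2 * inner ℝ (w y) (deriv w y)) =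
      -∫ y in (-1 : ℝ)..1, deriv χ y * ‖w y‖ ^ 2 := by
    rw [intervalIntegral.integral_mul_deriv_eq_deriv_mul
      (fun y _ => (hχ.differentiable one_ne_zero y).hasDerivAt)
      (fun y _ => (hw.differentiable one_ne_zero y).hasDerivAt.norm_sq)
      (hχ'.intervalIntegrable _ _) (Continuous.intervalIntegrable (by fun_prop) _ _)]
    simp [hw_left, hw_right]
  rw [← abs_neg, ← by_parts]
  refine abs_integral_le_mul_nL2_mul_nL2 hw.continuous hw' (fun y => ?_) (by positivity)
  calc |χ y * (2 * inner ℝ (w y) (deriv w y))|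
      = 2 * (|χ y| * |inner ℝ (w y) (deriv w y)|) := by rw [abs_mul, abs_mul, abs_two]; ring
    _ ≤ 2 * (A * (‖w y‖ * ‖deriv w y‖)) := by
        gcongr
        exacts [hA y, abs_real_inner_le_norm _ _]
    _ = 2 * A * (‖w y‖ * ‖deriv w y‖) := by ring

end Multipliers

section WeakForm

variable {w : ℝ → ℂ} {χ : ℝ → ℝ} {B : ℝ}

lemma innI_couetteResolvent {g : ℝ → ℂ} (ν k lam μ : ℝ) (hw : ContDiff ℝ 2 w)
    (hg : ContDiff ℝ 1 g) (hg_left : g (-1) = 0) (hg_right : g 1 = 0) :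
    innI (couetteResolvent ν k lam μ w) g =
      ∫ y in (-1 : ℝ)..1, ((ν : ℂ) * (deriv w y * conj (deriv g y)) +
        (((ν * k ^ 2 - μ : ℝ) : ℂ) + Complex.I * ((k * (y - lam) : ℝ) : ℂ)) *
          (w y * conj (g y))) := by
  have hw' : ContDiff ℝ 1 (deriv w) := ContDiff.deriv' hw
  have hw'' := hw'.continuous_deriv le_rfl
  have _ : Continuous (deriv g) := hg.continuous_deriv le_rfl
  have cw := hw.continuous
  have cw' := hw'.continuous
  have cg := hg.continuous
  have by_parts : ∫ y in (-1 : ℝ)..1, deriv w y * conj (deriv g y) =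
      -∫ y in (-1 : ℝ)..1, deriv (deriv w) y * conj (g y) := by
    rw [intervalIntegral.integral_mul_deriv_eq_deriv_mul
      (fun y _ => (hw'.differentiable one_ne_zero y).hasDerivAt)
      (v := fun y => conj (g y)) (v' := fun y => conj (deriv g y))
      (fun y _ => (hg.differentiable one_ne_zero y).hasDerivAt.star)
      (hw''.intervalIntegrable _ _) (Continuous.intervalIntegrable (by fun_prop) _ _)]
    simp [hg_left, hg_right]
  rw [innI_eq_intervalIntegral, intervalIntegral.integral_add,
    intervalIntegral.integral_const_mul, by_parts, ← intervalIntegral.integral_neg,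
    ← intervalIntegral.integral_const_mul, ← intervalIntegral.integral_add]
  · refine intervalIntegral.integral_congr fun y _ => ?_
    simp only [couetteResolvent]
    push_cast
    ring
  all_goals exact Continuous.intervalIntegrable (by fun_prop) _ _

lemma re_innI_couetteResolvent_self (ν k lam μ : ℝ) (hw : ContDiff ℝ 2 w)
    (hw_left : w (-1) = 0) (hw_right : w 1 = 0) :
    (innI (couetteResolvent ν k lam μ w) w).re =
      ν * nL2 (deriv w) ^ 2 + (ν * k ^ 2 - μ) * nL2 w ^ 2 := by
  have hw1 : ContDiff ℝ 1 w := hw.of_le one_le_two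
  have cw := hw.continuous
  have _ : Continuous (deriv w) := hw1.continuous_deriv le_rfl
  rw [innI_couetteResolvent ν k lam μ hw hw1 hw_left hw_right, ← Complex.reCLM_apply,
    ← ContinuousLinearMap.intervalIntegral_comp_comm, nL2_sq, nL2_sq,
    ← intervalIntegral.integral_const_mul, ← intervalIntegral.integral_const_mul,
    ← intervalIntegral.integral_add]
  · refine intervalIntegral.integral_congr fun y _ => ?_
    simp [Complex.mul_conj, Complex.normSq_eq_norm_sq, -Complex.ofReal_pow]
  all_goals exact Continuous.intervalIntegrable (by fun_prop) _ _

lemma im_innI_couetteResolvent_smul (ν k lam μ : ℝ) (hw : ContDiff ℝ 2 w)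
    (hw_left : w (-1) = 0) (hw_right : w 1 = 0) (hχ : ContDiff ℝ 1 χ) :
    (innI (couetteResolvent ν k lam μ w) (fun y => χ y • w y)).im =
      ν * (∫ y in (-1 : ℝ)..1, deriv χ y * (deriv w y * conj (w y)).im) +
        k * ∫ y in (-1 : ℝ)..1, (y - lam) * χ y * ‖w y‖ ^ 2 := by
  have hw1 : ContDiff ℝ 1 w := hw.of_le one_le_two
  have cw := hw.continuous
  have _ : Continuous (deriv w) := hw1.continuous_deriv le_rfl
  have cχ := hχ.continuous
  have _ : Continuous (deriv χ) := hχ.continuous_deriv le_rfl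
  rw [innI_couetteResolvent ν k lam μ hw (g := fun y => χ y • w y) (hχ.smul hw1)
      (by simp [hw_left]) (by simp [hw_right]),
    deriv_real_smul (hχ.differentiable one_ne_zero) (hw1.differentiable one_ne_zero),
    ← Complex.imCLM_apply, ← ContinuousLinearMap.intervalIntegral_comp_comm,
    ← intervalIntegral.integral_const_mul, ← intervalIntegral.integral_const_mul,
    ← intervalIntegral.integral_add]
  · refine intervalIntegral.integral_congr fun y _ => ?_
    simp only [Complex.imCLM_apply, ← Complex.normSq_eq_norm_sq, Complex.normSq_apply,
      Complex.real_smul, Complex.add_im, Complex.add_re, Complex.mul_im, Complex.mul_re,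
      Complex.ofReal_re, Complex.ofReal_im, Complex.I_re, Complex.I_im, Complex.conj_re,
      Complex.conj_im]
    ring
  all_goals exact Continuous.intervalIntegrable (by fun_prop) _ _

lemma abs_shear_integral_le {ν : ℝ} (k lam μ : ℝ) (hν : 0 ≤ ν) (hw : ContDiff ℝ 2 w)
    (hw_left : w (-1) = 0) (hw_right : w 1 = 0) (hχ : ContDiff ℝ 1 χ)
    (hB : ∀ y, |deriv χ y| ≤ B) :
    |k * ∫ y in (-1 : ℝ)..1, (y - lam) * χ y * ‖w y‖ ^ 2| ≤
      ‖innI (couetteResolvent ν k lam μ w) (fun y => χ y • w y)‖ +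
        ν * (B * (nL2 w * nL2 (deriv w))) := by
  have hB0 : 0 ≤ B := (abs_nonneg _).trans (hB 0)
  have hw' := (hw.of_le one_le_two).continuous_deriv le_rfl
  have commutator : |∫ y in (-1 : ℝ)..1, deriv χ y * (deriv w y * conj (w y)).im| ≤
      B * (nL2 w * nL2 (deriv w)) := by
    refine abs_integral_le_mul_nL2_mul_nL2 hw.continuous hw' (fun y => ?_) hB0
    rw [abs_mul]
    gcongr
    · exact hB y
    · exact (Complex.abs_im_le_norm _).trans_eq (by rw [norm_mul, RCLike.norm_conj, mul_comm])
  rw [← sub_eq_iff_eq_add'.2 (im_innI_couetteResolvent_smul ν k lam μ hw hw_left hw_right hχ)]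
  refine (abs_sub _ _).trans (add_le_add (Complex.abs_im_le_norm _) ?_)
  rw [abs_mul, abs_of_nonneg hν]
  gcongr

end WeakForm

section LayerProfile

lemma contDiff_layerProfile {n : WithTop ℕ∞} : ContDiff ℝ n layerProfile :=
  contDiff_id.div (by fun_prop) fun t => by positivity

lemma deriv_layerProfile (t : ℝ) : deriv layerProfile t = (1 - t ^ 2) / (1 + t ^ 2) ^ 2 := by
  have h : HasDerivAt layerProfile _ t :=
    (hasDerivAt_id t).div (((hasDerivAt_id t).pow 2).const_add 1) (by positivity : 1 + t ^ 2 ≠ 0)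
  rw [h.deriv]
  simp
  ring

lemma abs_layerProfile_le (t : ℝ) : |layerProfile t| ≤ 1 / 2 := by
  rw [layerProfile, abs_div, abs_of_pos (by positivity : 0 < 1 + t ^ 2),
    div_le_div_iff₀ (by positivity) two_pos, ← sq_abs t]
  nlinarith [sq_nonneg (1 - |t|)]

lemma abs_deriv_layerProfile_le (t : ℝ) : |deriv layerProfile t| ≤ 1 := by
  rw [deriv_layerProfile, abs_div, abs_of_pos (by positivity : 0 < (1 + t ^ 2) ^ 2),
    div_le_one (by positivity), abs_le]
  constructor <;> nlinarith [sq_nonneg t, sq_nonneg (t ^ 2)]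

lemma half_le_deriv_layerProfile_add (t : ℝ) :
    1 / 2 ≤ deriv layerProfile t + t * layerProfile t := by
  have h : deriv layerProfile t + t * layerProfile t = (1 + t ^ 4) / (1 + t ^ 2) ^ 2 := by
    rw [deriv_layerProfile, layerProfile]
    field_simp
    ring
  rw [h, le_div_iff₀ (by positivity)]
  nlinarith [sq_nonneg (1 - t ^ 2)]

lemma contDiff_layerMultiplier {n : WithTop ℕ∞} (δ lam : ℝ) :
    ContDiff ℝ n (layerMultiplier δ lam) :=
  contDiff_layerProfile.comp ((contDiff_id.sub contDiff_const).div_const δ)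

lemma deriv_layerMultiplier (δ lam y : ℝ) :
    deriv (layerMultiplier δ lam) y = deriv layerProfile ((y - lam) / δ) / δ := by
  have outer := (contDiff_layerProfile.differentiable one_ne_zero ((y - lam) / δ)).hasDerivAt
  have inner := ((hasDerivAt_id y).sub_const lam).div_const δ
  exact (outer.comp y inner).deriv.trans (mul_one_div _ _)

lemma abs_layerMultiplier_le (δ lam y : ℝ) : |layerMultiplier δ lam y| ≤ 1 / 2 :=
  abs_layerProfile_le _

lemma abs_deriv_layerMultiplier_le {δ : ℝ} (hδ : 0 < δ) (lam y : ℝ) :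
    |deriv (layerMultiplier δ lam) y| ≤ 1 / δ := by
  rw [deriv_layerMultiplier, abs_div, abs_of_pos hδ]
  gcongr
  exact abs_deriv_layerProfile_le _

lemma half_le_mul_deriv_layerMultiplier_add {δ : ℝ} (hδ : δ ≠ 0) (lam y : ℝ) :
    1 / 2 ≤ δ * deriv (layerMultiplier δ lam) y + (y - lam) / δ * layerMultiplier δ lam y := by
  rw [deriv_layerMultiplier, mul_div_cancel₀ _ hδ]
  exact half_le_deriv_layerProfile_add _

end LayerProfile

section ResolventEstimates

variable {w : ℝ → ℂ} {ν k δ lam μ M : ℝ}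

lemma half_nL2_sq_le (hδ : 0 < δ) (lam : ℝ) (hw : ContDiff ℝ 1 w) (hw_left : w (-1) = 0)
    (hw_right : w 1 = 0) :
    1 / 2 * nL2 w ^ 2 ≤
      1 / δ * (∫ y in (-1 : ℝ)..1, (y - lam) * layerMultiplier δ lam y * ‖w y‖ ^ 2) +
        δ * (nL2 w * nL2 (deriv w)) := by
  have hχ : ContDiff ℝ 1 (layerMultiplier δ lam) := contDiff_layerMultiplier δ lam
  have cχ := hχ.continuous
  have _ : Continuous (deriv (layerMultiplier δ lam)) := hχ.continuous_deriv le_rfl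
  have cw := hw.continuous
  have layer_part := (le_abs_self _).trans
    (abs_integral_deriv_mul_norm_sq_le hχ hw hw_left hw_right (abs_layerMultiplier_le δ lam))
  calc 1 / 2 * nL2 w ^ 2 = ∫ y in (-1 : ℝ)..1, 1 / 2 * ‖w y‖ ^ 2 := by
        rw [nL2_sq, intervalIntegral.integral_const_mul]
    _ ≤ ∫ y in (-1 : ℝ)..1, (1 / δ * ((y - lam) * layerMultiplier δ lam y * ‖w y‖ ^ 2) +
          δ * (deriv (layerMultiplier δ lam) y * ‖w y‖ ^ 2)) := by
        refine intervalIntegral.integral_mono_on (by norm_num)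
          (Continuous.intervalIntegrable (by fun_prop) _ _)
          (Continuous.intervalIntegrable (by fun_prop) _ _) fun y _ => ?_
        refine (mul_le_mul_of_nonneg_right
          (half_le_mul_deriv_layerMultiplier_add hδ.ne' lam y) (sq_nonneg _)).trans_eq ?_
        ring
    _ = 1 / δ * (∫ y in (-1 : ℝ)..1, (y - lam) * layerMultiplier δ lam y * ‖w y‖ ^ 2) +
          δ * ∫ y in (-1 : ℝ)..1, deriv (layerMultiplier δ lam) y * ‖w y‖ ^ 2 := by
        rw [intervalIntegral.integral_add, intervalIntegral.integral_const_mul,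
          intervalIntegral.integral_const_mul]
        all_goals exact Continuous.intervalIntegrable (by fun_prop) _ _
    _ ≤ _ := by
        gcongr
        linarith

lemma energy_estimate (hν : 0 ≤ ν) (hk : 1 ≤ |k|) (hw : ContDiff ℝ 2 w) (hw_left : w (-1) = 0)
    (hw_right : w 1 = 0) (hM : Dominates (couetteResolvent ν k lam μ w) M) :
    ν * nH1 w ^ 2 ≤ M * nH1 w + μ * nL2 w ^ 2 := by
  have tested : ν * nL2 (deriv w) ^ 2 + (ν * k ^ 2 - μ) * nL2 w ^ 2 ≤ M * nH1 w := by
    rw [← re_innI_couetteResolvent_self ν k lam μ hw hw_left hw_right]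
    exact (Complex.re_le_norm _).trans (hM w (hw.of_le one_le_two) hw_left hw_right)
  have frequency : ν * nL2 w ^ 2 ≤ ν * k ^ 2 * nL2 w ^ 2 := by
    gcongr
    exact le_mul_of_one_le_right hν ((one_le_sq_iff_one_le_abs k).2 hk)
  rw [nH1_sq]
  linarith

lemma layer_estimate (hν : 0 ≤ ν) (hδ : 0 < δ) (hM0 : 0 ≤ M) (hw : ContDiff ℝ 2 w)
    (hw_left : w (-1) = 0) (hw_right : w 1 = 0)
    (hM : Dominates (couetteResolvent ν k lam μ w) M) :
    |k| * δ * (1 / 2 * nL2 w ^ 2) ≤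
      M * (nH1 w + 2 * (nL2 w / δ)) + (ν / δ + |k| * δ ^ 2) * (nL2 w * nL2 (deriv w)) := by
  have hw1 : ContDiff ℝ 1 w := hw.of_le one_le_two
  have hχ : ContDiff ℝ 1 (layerMultiplier δ lam) := contDiff_layerMultiplier δ lam
  have hχ' := abs_deriv_layerMultiplier_le hδ lam
  set J := ∫ y in (-1 : ℝ)..1, (y - lam) * layerMultiplier δ lam y * ‖w y‖ ^ 2
  have tested : ‖innI (couetteResolvent ν k lam μ w) (fun y => layerMultiplier δ lam y • w y)‖ ≤
      M * (nH1 w + 2 * (nL2 w / δ)) :=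
    calc _ ≤ M * nH1 (fun y => layerMultiplier δ lam y • w y) :=
          hM _ (hχ.smul hw1) (by simp [hw_left]) (by simp [hw_right])
      _ ≤ M * (2 * (1 / 2 * nH1 w + 1 / δ * nL2 w)) :=
          mul_le_mul_of_nonneg_left
            (nH1_smul_le hχ hw1 (abs_layerMultiplier_le δ lam) hχ') hM0
      _ = M * (nH1 w + 2 * (nL2 w / δ)) := by ring
  have shear : |k| * J ≤ M * (nH1 w + 2 * (nL2 w / δ)) + ν * (1 / δ * (nL2 w * nL2 (deriv w))) :=
    calc |k| * J ≤ |k * J| := by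
          rw [abs_mul]
          gcongr
          exact le_abs_self J
      _ ≤ _ := (abs_shear_integral_le k lam μ hν hw hw_left hw_right hχ hχ').trans (by gcongr)
  calc |k| * δ * (1 / 2 * nL2 w ^ 2)
    _ ≤ |k| * δ * (1 / δ * J + δ * (nL2 w * nL2 (deriv w))) := by
        gcongr
        exact half_nL2_sq_le hδ lam hw1 hw_left hw_right
    _ = |k| * J + |k| * δ ^ 2 * (nL2 w * nL2 (deriv w)) := by
        field_simp
    _ ≤ _ := (add_le_add_left shear _).trans_eq (by ring)

lemma add_le_of_sq_le_of_half_sq_le {H N ε : ℝ} (hM : 0 ≤ M) (hε : ε ≤ 1 / 136)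
    (energy : H ^ 2 ≤ M * H + ε * N ^ 2)
    (layer : 1 / 2 * N ^ 2 ≤ M * (H + 2 * N) + 2 * (N * H)) :
    H + N ≤ 16 * M := by
  have hN : N ^ 2 ≤ 34 * (H ^ 2 + M ^ 2) := by
    nlinarith [sq_nonneg (N - 8 * M), sq_nonneg (H - M), sq_nonneg (N - 8 * H)]
  have hH : H ^ 2 ≤ 3 * M ^ 2 := by
    nlinarith [sq_nonneg (H - M), mul_le_mul_of_nonneg_right hε (sq_nonneg N)]
  have hH' : H ≤ 2 * M := abs_le_of_sq_le_sq' (by nlinarith) (by positivity) |>.2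
  have hN' : N ≤ 14 * M := abs_le_of_sq_le_sq' (by nlinarith) (by positivity) |>.2
  linarith

theorem resolvent_estimate_of_layer_width {ε : ℝ} (hδ : 0 < δ) (hk : 1 ≤ |k|)
    (hν : |k| * δ ^ 3 = ν) (hε : ε ≤ 1 / 136) (hM0 : 0 ≤ M) (hw : ContDiff ℝ 2 w)
    (hw_left : w (-1) = 0) (hw_right : w 1 = 0)
    (hM : Dominates (couetteResolvent ν k lam (ε * (ν / δ ^ 2)) w) M) :
    ν * nL2 (deriv w) + ν / δ * nL2 w ≤ 16 * M := by
  have hν0 : 0 ≤ ν := hν ▸ by positivity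
  have energy := energy_estimate hν0 hk hw hw_left hw_right hM
  have layer : 1 / 2 * (ν / δ ^ 2 * nL2 w ^ 2) ≤
      M * (nH1 w + 2 * (nL2 w / δ)) + 2 * (ν / δ * (nL2 w * nH1 w)) := by
    have hkδ : |k| * δ = ν / δ ^ 2 := by rw [← hν]; field_simp
    have hkδ2 : |k| * δ ^ 2 = ν / δ := by rw [← hν]; field_simp
    have raw := layer_estimate hν0 hδ hM0 hw hw_left hw_right hM
    rw [hkδ, hkδ2] at raw
    have deriv_le : ν / δ * (nL2 w * nL2 (deriv w)) ≤ ν / δ * (nL2 w * nH1 w) := by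
      gcongr
      exacts [nL2_nonneg w, nL2_deriv_le_nH1 w]
    linarith
  have combined : ν * nH1 w + ν / δ * nL2 w ≤ 16 * M := by
    refine add_le_of_sq_le_of_half_sq_le hM0 hε ?_ ?_
    · calc (ν * nH1 w) ^ 2 = ν * (ν * nH1 w ^ 2) := by ring
        _ ≤ ν * (M * nH1 w + ε * (ν / δ ^ 2) * nL2 w ^ 2) := by gcongr
        _ = _ := by ring
    · calc 1 / 2 * (ν / δ * nL2 w) ^ 2 = ν * (1 / 2 * (ν / δ ^ 2 * nL2 w ^ 2)) := by ring
        _ ≤ ν * (M * (nH1 w + 2 * (nL2 w / δ)) + 2 * (ν / δ * (nL2 w * nH1 w))) := by gcongr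
        _ = _ := by ring
  refine le_trans ?_ combined
  gcongr
  exact nL2_deriv_le_nH1 w

end ResolventEstimates

lemma exists_layer_width {ν K : ℝ} (hν : 0 < ν) (hK : 0 < K) :
    ∃ δ : ℝ, 0 < δ ∧ K * δ ^ 3 = ν ∧
      ν ^ ((1 : ℝ) / 3) * K ^ ((2 : ℝ) / 3) = ν / δ ^ 2 ∧
      ν ^ ((2 : ℝ) / 3) * K ^ ((1 : ℝ) / 3) = ν / δ := by
  have rpow_third_cubed {x : ℝ} (hx : 0 < x) : (x ^ ((1 : ℝ) / 3)) ^ 3 = x := by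
    rw [← Real.rpow_mul_natCast hx.le]
    norm_num
  have rpow_two_thirds {x : ℝ} (hx : 0 < x) : x ^ ((2 : ℝ) / 3) = (x ^ ((1 : ℝ) / 3)) ^ 2 := by
    rw [← Real.rpow_mul_natCast hx.le]
    norm_num
  have hp := rpow_third_cubed hν
  have hq := rpow_third_cubed hK
  rw [rpow_two_thirds hν, rpow_two_thirds hK]
  have hp0 : 0 < ν ^ ((1 : ℝ) / 3) := by positivity
  have hq0 : 0 < K ^ ((1 : ℝ) / 3) := by positivity
  generalize ν ^ ((1 : ℝ) / 3) = p at hp hp0 ⊢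
  generalize K ^ ((1 : ℝ) / 3) = q at hq hq0 ⊢
  subst hp hq
  refine ⟨p / q, by positivity, ?_, ?_, ?_⟩ <;> field_simp

theorem statement3_general {ν k ε lam M : ℝ} {w : ℝ → ℂ} (hν : 0 < ν) (hk : 1 ≤ |k|)
    (hε : ε ≤ 1 / 136) (hM0 : 0 ≤ M) (hw : ContDiff ℝ 2 w) (hw_left : w (-1) = 0)
    (hw_right : w 1 = 0)
    (hM : Dominates
      (couetteResolvent ν k lam (ε * ν ^ ((1 : ℝ) / 3) * |k| ^ ((2 : ℝ) / 3)) w) M) :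
    ν * nL2 (deriv w) + ν ^ ((2 : ℝ) / 3) * |k| ^ ((1 : ℝ) / 3) * nL2 w ≤ 16 * M := by
  obtain ⟨δ, hδ, hδ3, hμ, hcoeff⟩ := exists_layer_width hν (one_pos.trans_le hk)
  rw [mul_assoc, hμ] at hM
  rw [hcoeff]
  exact resolvent_estimate_of_layer_width hδ hk hδ3 hε hM0 hw hw_left hw_right hM

/-- `H^{-1}` resolvent estimate for the vorticity with Navier-slip boundary conditions. -/
theorem statement3 :
    ∃ ε₀ C : ℝ, 0 < ε₀ ∧ ε₀ < 1 ∧ 0 < C ∧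
      ∀ (ν : ℝ) (k : ℤ) (ε lam : ℝ) (w F : ℝ → ℂ) (M : ℝ),
        0 < ν → ν ≤ 1 → 1 ≤ |k| → 0 < ε → ε ≤ ε₀ →
        ContDiff ℝ 2 w → w (-1) = 0 → w 1 = 0 →
        (F = fun y : ℝ => -(ν : ℂ) * (deriv (deriv w) y - (k:ℂ)^2 * w y)
            + Complex.I * (k:ℂ) * ((y:ℂ) - (lam:ℂ)) * w y
            - ((ε * ν ^ ((1:ℝ)/3) * |(k:ℝ)| ^ ((2:ℝ)/3) : ℝ) : ℂ) * w y) →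
        0 ≤ M → Dominates F M →
        ν * nL2 (deriv w) + ν ^ ((2:ℝ)/3) * |(k:ℝ)| ^ ((1:ℝ)/3) * nL2 w ≤ C * M := by
  refine ⟨1 / 136, 16, by norm_num, by norm_num, by norm_num, ?_⟩
  rintro ν k ε lam w F M hν _ hk _ hε hw hw_left hw_right rfl hM0 hM
  exact statement3_general (k := k) (lam := lam) hν (by exact_mod_cast hk) hε hM0 hw hw_left
    hw_right (by convert hM using 2; simp [couetteResolvent])
end
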